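/- For the recursively defined elements Q^{(n)} ∈ TL^B_n (Q^{(0)} = 1, Q^{(n+1)} = Q^{(n)} + ([n]_s/[n+1]_s)·Q^{(n)} e_n Q^{(n)}), one has (Q^{(n)} e_n Q^{(n)})² = −([n+1]_s/[n]_s) · Q^{(n)} e_n Q^{(n)} in TL^B_{n+1}, for all n ≥ 1. -/

import Mathlib

noncomputable section
open scoped Classical

/-! ### The field `ℂ(q,s)` and two-variable quantum integers -/

/-- The field `ℂ(q,s)` of rational functions in two variables. -/
abbrev 𝕃 : Type := FractionRing (MvPolynomial (Fin 2) ℂ)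

/-- The variable `q`. -/
def qB : 𝕃 := algebraMap (MvPolynomial (Fin 2) ℂ) 𝕃 (MvPolynomial.X 0)

/-- The variable `s`. -/
def sB : 𝕃 := algebraMap (MvPolynomial (Fin 2) ℂ) 𝕃 (MvPolynomial.X 1)

/-- The two-variable quantum integer `[n]_s`: `[0]_s = 1` and
`[n]_s = q^(n-1) s + q^(-(n-1)) s⁻¹` for `n ≥ 1`. -/
def bqInt (n : ℤ) : 𝕃 := if n = 0 then 1 else qB ^ (n - 1) * sB + qB ^ (1 - n) * sB⁻¹

/-! ### The Temperley–Lieb algebra of type B and its Jones–Wenzl projections -/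

/-- Defining relations of the Temperley–Lieb algebra `TL^B_n` of type B.
The generator indexed by `i : Fin n` represents `e_i` (labels `0, …, n-1`):
the type A relations among `e_1, …, e_{n-1}`, together with `e_0² = -[1]_s e_0`,
`e_1 e_0 e_1 = (q s⁻¹ + q⁻¹ s) e_1`, and `e_0 e_i = e_i e_0` for `i ≥ 2`. -/
inductive TLBrel (n : ℕ) : FreeAlgebra 𝕃 (Fin n) → FreeAlgebra 𝕃 (Fin n) → Prop
  | sqA (i : Fin n) (h : 1 ≤ (i : ℕ)) :
      TLBrel n (FreeAlgebra.ι 𝕃 i * FreeAlgebra.ι 𝕃 i) ((-(qB + qB⁻¹)) • FreeAlgebra.ι 𝕃 i)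
  | sq0 (i : Fin n) (h : (i : ℕ) = 0) :
      TLBrel n (FreeAlgebra.ι 𝕃 i * FreeAlgebra.ι 𝕃 i) ((-(bqInt 1)) • FreeAlgebra.ι 𝕃 i)
  | braidA (i j : Fin n) (hi : 1 ≤ (i : ℕ)) (hj : 1 ≤ (j : ℕ))
      (h : (j : ℕ) = i + 1 ∨ (i : ℕ) = j + 1) :
      TLBrel n (FreeAlgebra.ι 𝕃 i * FreeAlgebra.ι 𝕃 j * FreeAlgebra.ι 𝕃 i) (FreeAlgebra.ι 𝕃 i)
  | braid0 (i j : Fin n) (hi : (i : ℕ) = 1) (hj : (j : ℕ) = 0) :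
      TLBrel n (FreeAlgebra.ι 𝕃 i * FreeAlgebra.ι 𝕃 j * FreeAlgebra.ι 𝕃 i)
        ((qB * sB⁻¹ + qB⁻¹ * sB) • FreeAlgebra.ι 𝕃 i)
  | comm (i j : Fin n) (h : (i : ℕ) + 1 < j ∨ (j : ℕ) + 1 < i) :
      TLBrel n (FreeAlgebra.ι 𝕃 i * FreeAlgebra.ι 𝕃 j) (FreeAlgebra.ι 𝕃 j * FreeAlgebra.ι 𝕃 i)

/-- The Temperley–Lieb algebra `TL^B_n` of type B, with generators `e_0, …, e_{n-1}`. -/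
abbrev TLB (n : ℕ) : Type := RingQuot (TLBrel n)

/-- The generator `e_i` of `TL^B_n` (0-based labels). -/
def EB {n : ℕ} (i : Fin n) : TLB n := RingQuot.mkAlgHom 𝕃 (TLBrel n) (FreeAlgebra.ι 𝕃 i)

set_option synthInstance.maxHeartbeats 1000000 in
/-- The natural inclusion `TL^B_n → TL^B_{n+1}`, sending `e_i` to `e_i`. -/
def TLBincl (n : ℕ) : TLB n →ₐ[𝕃] TLB (n + 1) :=
  RingQuot.liftAlgHom 𝕃
    ⟨FreeAlgebra.lift 𝕃 (fun i => EB i.castSucc), by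
      intro x y h
      induction h with
      | sqA i h =>
          have h2 := RingQuot.mkAlgHom_rel 𝕃 (TLBrel.sqA i.castSucc (by simpa using h))
          simp only [map_mul, map_smul, FreeAlgebra.lift_ι_apply, EB] at h2 ⊢
          exact h2
      | sq0 i h =>
          have h2 := RingQuot.mkAlgHom_rel 𝕃 (TLBrel.sq0 i.castSucc (by simpa using h))
          simp only [map_mul, map_smul, FreeAlgebra.lift_ι_apply, EB] at h2 ⊢
          exact h2
      | braidA i j hi hj h =>
          have h2 := RingQuot.mkAlgHom_rel 𝕃
            (TLBrel.braidA i.castSucc j.castSucc (by simpa using hi) (by simpa using hj)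
              (by simpa using h))
          simp only [map_mul, FreeAlgebra.lift_ι_apply, EB] at h2 ⊢
          exact h2
      | braid0 i j hi hj =>
          have h2 := RingQuot.mkAlgHom_rel 𝕃
            (TLBrel.braid0 i.castSucc j.castSucc (by simpa using hi) (by simpa using hj))
          simp only [map_mul, map_smul, FreeAlgebra.lift_ι_apply, EB] at h2 ⊢
          exact h2
      | comm i j h =>
          have h2 := RingQuot.mkAlgHom_rel 𝕃
            (TLBrel.comm i.castSucc j.castSucc (by simpa using h))
          simp only [map_mul, FreeAlgebra.lift_ι_apply, EB] at h2 ⊢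
          exact h2⟩

/-- The iterated natural inclusion `TL^B_n → TL^B_{n+k}`. -/
def TLBinclIter (n : ℕ) : (k : ℕ) → TLB n →ₐ[𝕃] TLB (n + k)
  | 0 => AlgHom.id 𝕃 (TLB n)
  | k + 1 => (TLBincl (n + k)).comp (TLBinclIter n k)

/-- The type B Jones–Wenzl projection `Q^{(n)} ∈ TL^B_n`, via the recurrence
`Q^{(0)} = 1`, `Q^{(n+1)} = Q^{(n)} + ([n]_s/[n+1]_s) Q^{(n)} e_n Q^{(n)}`. -/
def JWB : (n : ℕ) → TLB n
  | 0 => 1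
  | n + 1 =>
      TLBincl n (JWB n) +
        (bqInt n / bqInt (n + 1)) •
          (TLBincl n (JWB n) * EB (Fin.last n) * TLBincl n (JWB n))

/-!
Let `p` be the image of `Q^{(n)}` in `TL^B_{n+2}`, put `e = e_n`, `f = e_{n+1}`, and let
`x = p + c p e p`, `c = [n]_s/[n+1]_s`, be the image of `Q^{(n+1)}`. Since `f` commutes with the
idempotent `p`, the relations `f² = -[2] f` and `f e f = b f` give `f x f = (-[2] + c b) p f`, and
`-[2] + c b = -[n+2]_s/[n+1]_s` is the three-term recurrence of the `[n]_s`. If `x` is idempotent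
too, then multiplying by `x` on both sides gives the square of `x f x`, and the value of the scalar
is exactly what makes `x + ([n+1]_s/[n+2]_s) x f x` idempotent. The induction therefore has to
carry the idempotence of two consecutive `Q^{(n)}`.
-/

section WenzlStep

variable {R A : Type*} [Semiring A] {p e f : A}

/-- One step of Wenzl's recursion: the passage from `p` to `p + c p e p`, which produces
`Q^{(n+1)}` from `p = Q^{(n)}` and `e = e_n`. -/
def wenzlStep [CommSemiring R] [Algebra R A] (c : R) (p e : A) : A :=
  p + c • (p * e * p)

theorem map_wenzlStep {B : Type*} [CommSemiring R] [Algebra R A] [Semiring B] [Algebra R B]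
    (φ : A →ₐ[R] B) (c : R) (p e : A) :
    φ (wenzlStep c p e) = wenzlStep c (φ p) (φ e) := by
  simp only [wenzlStep, map_add, map_smul, map_mul]

theorem wenzlStep_mul_self [CommSemiring R] [Algebra R A] (c : R) (hp : IsIdempotentElem p) :
    wenzlStep c p e * p = wenzlStep c p e := by
  rw [wenzlStep, add_mul, smul_mul_assoc, mul_assoc (p * e), hp.eq]

theorem mul_wenzlStep_mul [CommSemiring R] [Algebra R A] {a b : R} (c : R)
    (hp : IsIdempotentElem p) (hfp : Commute f p) (hff : f * f = a • f)
    (hfe : f * e * f = b • f) :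
    f * wenzlStep c p e * f = (a + c * b) • (p * f) := by
  have h_left : f * p * f = a • (p * f) := by
    rw [hfp.eq, mul_assoc, hff, mul_smul_comm]
  have h_right : f * (p * e * p) * f = b • (p * f) :=
    calc f * (p * e * p) * f = (f * p) * e * (p * f) := by simp only [mul_assoc]
      _ = (p * f) * e * (f * p) := by rw [hfp.eq]
      _ = p * (f * e * f) * p := by simp only [mul_assoc]
      _ = b • (p * (f * p)) := by rw [hfe, mul_smul_comm, smul_mul_assoc, mul_assoc]
      _ = b • (p * f) := by rw [hfp.eq, ← mul_assoc, hp.eq]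
  rw [wenzlStep, mul_add, add_mul, mul_smul_comm, smul_mul_assoc, h_left, h_right, smul_smul,
    ← add_smul]

theorem wenzlStep_mul_mul_wenzlStep_sq [CommSemiring R] [Algebra R A] {a b c : R}
    (hp : IsIdempotentElem p) (hfp : Commute f p) (hff : f * f = a • f)
    (hfe : f * e * f = b • f) (hx : IsIdempotentElem (wenzlStep c p e)) :
    (wenzlStep c p e * f * wenzlStep c p e) * (wenzlStep c p e * f * wenzlStep c p e) =
      (a + c * b) • (wenzlStep c p e * f * wenzlStep c p e) := by
  have hxp : wenzlStep c p e * p = wenzlStep c p e := wenzlStep_mul_self c hp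
  have hfxf : f * wenzlStep c p e * f = (a + c * b) • (p * f) := mul_wenzlStep_mul c hp hfp hff hfe
  generalize wenzlStep c p e = x at *
  calc (x * f * x) * (x * f * x) = x * f * (x * x) * f * x := by simp only [mul_assoc]
    _ = x * (f * x * f) * x := by rw [hx.eq]; simp only [mul_assoc]
    _ = (a + c * b) • (x * p * f * x) := by
      rw [hfxf, mul_smul_comm, smul_mul_assoc, ← mul_assoc]
    _ = (a + c * b) • (x * f * x) := by rw [hxp]

theorem isIdempotentElem_wenzlStep [CommRing R] [Algebra R A] {c d : R}
    (hp : IsIdempotentElem p) (hpep : (p * e * p) * (p * e * p) = d • (p * e * p))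
    (hcd : c * d = -1) :
    IsIdempotentElem (wenzlStep c p e) := by
  have h_left : p * (p * e * p) = p * e * p := by rw [← mul_assoc, ← mul_assoc, hp.eq]
  have h_right : p * e * p * p = p * e * p := by rw [mul_assoc, hp.eq]
  unfold IsIdempotentElem wenzlStep
  generalize p * e * p = y at *
  calc (p + c • y) * (p + c • y) = p + (c + (c + c * (c * d))) • y := by
        simp only [add_mul, mul_add, smul_mul_assoc, mul_smul_comm, hp.eq, h_left, h_right, hpep,
          smul_add, smul_smul, add_smul, add_assoc]
    _ = p + c • y := by rw [hcd, mul_neg_one, add_neg_cancel, add_zero]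

end WenzlStep

section QuantumIntegers

/-- The scalar `b` in `e_{n+1} e_n e_{n+1} = b e_{n+1}`: it is `q s⁻¹ + q⁻¹ s` for `n = 0` and
`1` otherwise. Having both cases in one symbol makes the recurrence of the `[n]_s` uniform, since
`[0]_s = 1` is not given by the general formula for `[n]_s`. -/
def braidCoeff : ℕ → 𝕃
  | 0 => qB * sB⁻¹ + qB⁻¹ * sB
  | _ + 1 => 1

theorem qB_ne_zero : qB ≠ 0 :=
  (FaithfulSMul.algebraMap_eq_zero_iff _ _).not.mpr (MvPolynomial.X_ne_zero 0)

theorem sB_ne_zero : sB ≠ 0 :=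
  (FaithfulSMul.algebraMap_eq_zero_iff _ _).not.mpr (MvPolynomial.X_ne_zero 1)

theorem bqInt_zero : bqInt 0 = 1 := if_pos rfl

theorem bqInt_add_one (n : ℕ) : bqInt (n + 1) = qB ^ n * sB + (qB ^ n * sB)⁻¹ := by
  rw [bqInt, if_neg (by omega), add_sub_cancel_right, sub_add_cancel_right, zpow_neg,
    zpow_natCast, mul_inv]

theorem qB_pow_mul_sB_sq_add_one_ne_zero (n : ℕ) : (qB ^ n * sB) ^ 2 + 1 ≠ 0 := by
  have h_poly : ((.X 0 ^ n * .X 1) ^ 2 + 1 : MvPolynomial (Fin 2) ℂ) ≠ 0 := by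
    intro h
    have h_eval := congrArg (MvPolynomial.eval fun _ => (1 : ℂ)) h
    norm_num at h_eval
  simpa only [qB, sB, map_add, map_mul, map_pow, map_one] using
    (FaithfulSMul.algebraMap_eq_zero_iff _ 𝕃).not.mpr h_poly

theorem bqInt_natCast_ne_zero (n : ℕ) : bqInt n ≠ 0 := by
  cases n with
  | zero => simp [bqInt_zero]
  | succ n =>
    have hx : qB ^ n * sB ≠ 0 := mul_ne_zero (pow_ne_zero n qB_ne_zero) sB_ne_zero
    rw [Nat.cast_succ, bqInt_add_one]
    intro h
    apply qB_pow_mul_sB_sq_add_one_ne_zero n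
    rw [sq, ← mul_inv_cancel₀ hx, ← mul_add, h, mul_zero]

theorem bqInt_add_two (n : ℕ) :
    bqInt (n + 1 + 1) = (qB + qB⁻¹) * bqInt (n + 1) - braidCoeff n * bqInt n := by
  have hq := qB_ne_zero
  have hs := sB_ne_zero
  have h_lhs := bqInt_add_one (n + 1)
  rw [Nat.cast_succ] at h_lhs
  rw [h_lhs, bqInt_add_one]
  cases n with
  | zero =>
    simp only [braidCoeff, Nat.cast_zero, bqInt_zero]
    field_simp
    ring
  | succ n =>
    rw [braidCoeff, Nat.cast_succ, bqInt_add_one]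
    field_simp
    ring

theorem neg_add_bqInt_div_mul_braidCoeff (n : ℕ) :
    -(qB + qB⁻¹) + bqInt n / bqInt (n + 1) * braidCoeff n =
      -(bqInt (n + 1 + 1) / bqInt (n + 1)) := by
  have h := bqInt_natCast_ne_zero (n + 1)
  rw [Nat.cast_succ] at h
  rw [bqInt_add_two, sub_div, mul_div_cancel_right₀ _ h]
  ring

end QuantumIntegers

section Generators

variable {n : ℕ}

theorem EB_mul_self (i : Fin n) (hi : 1 ≤ (i : ℕ)) : EB i * EB i = (-(qB + qB⁻¹)) • EB i := by
  simpa only [EB, map_mul, map_smul] using RingQuot.mkAlgHom_rel 𝕃 (TLBrel.sqA i hi)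

theorem EB_mul_self_of_eq_zero (i : Fin n) (hi : (i : ℕ) = 0) :
    EB i * EB i = (-bqInt 1) • EB i := by
  simpa only [EB, map_mul, map_smul] using RingQuot.mkAlgHom_rel 𝕃 (TLBrel.sq0 i hi)

theorem EB_commute (i j : Fin n) (h : (i : ℕ) + 1 < j ∨ (j : ℕ) + 1 < i) :
    Commute (EB i) (EB j) := by
  simpa only [EB, commute_iff_eq, map_mul] using RingQuot.mkAlgHom_rel 𝕃 (TLBrel.comm i j h)

theorem EB_mul_EB_mul_EB (i j : Fin n) (h : (i : ℕ) = j + 1) :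
    EB i * EB j * EB i = braidCoeff j • EB i := by
  rcases Nat.eq_zero_or_eq_succ_pred (j : ℕ) with hj | hj
  · rw [hj]
    simpa only [EB, braidCoeff, map_mul, map_smul] using
      RingQuot.mkAlgHom_rel 𝕃 (TLBrel.braid0 i j (by omega) hj)
  · rw [hj, braidCoeff, one_smul]
    simpa only [EB, map_mul] using
      RingQuot.mkAlgHom_rel 𝕃 (TLBrel.braidA i j (by omega) (by omega) (Or.inr h))

theorem TLBincl_EB (i : Fin n) : TLBincl n (EB i) = EB i.castSucc :=
  (RingQuot.liftAlgHom_mkAlgHom_apply _ _ _ _).trans (FreeAlgebra.lift_ι_apply _ _)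

theorem EB_last_commute_TLBincl_TLBincl (x : TLB n) :
    Commute (EB (Fin.last (n + 1))) (TLBincl (n + 1) (TLBincl n x)) := by
  obtain ⟨y, rfl⟩ := RingQuot.mkAlgHom_surjective 𝕃 (TLBrel n) x
  induction y using FreeAlgebra.induction with
  | grade0 r =>
    simp only [AlgHom.commutes]
    exact Algebra.commute_algebraMap_right r _
  | grade1 i =>
    change Commute _ (TLBincl (n + 1) (TLBincl n (EB i)))
    rw [TLBincl_EB, TLBincl_EB]
    exact EB_commute _ _ (Or.inr (by simp))
  | mul a b ha hb =>
    simp only [map_mul]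
    exact ha.mul_right hb
  | add a b ha hb =>
    simp only [map_add]
    exact ha.add_right hb

end Generators

section JonesWenzl

/-- The element `Q^{(n)} e_n Q^{(n)}` of `TL^B_{n+1}` appearing in the recursion for the
Jones–Wenzl projections. -/
def sandwichJWB (n : ℕ) : TLB (n + 1) :=
  TLBincl n (JWB n) * EB (Fin.last n) * TLBincl n (JWB n)

theorem JWB_succ (n : ℕ) :
    JWB (n + 1) =
      wenzlStep (bqInt n / bqInt (n + 1)) (TLBincl n (JWB n)) (EB (Fin.last n)) := rfl

theorem TLBincl_JWB_succ (n : ℕ) :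
    TLBincl (n + 1) (JWB (n + 1)) =
      wenzlStep (bqInt n / bqInt (n + 1)) (TLBincl (n + 1) (TLBincl n (JWB n)))
        (EB (Fin.last n).castSucc) := by
  rw [JWB_succ, map_wenzlStep, TLBincl_EB]

theorem sandwichJWB_zero_sq :
    sandwichJWB 0 * sandwichJWB 0 = (-bqInt 1) • sandwichJWB 0 := by
  have h : sandwichJWB 0 = EB (Fin.last 0) := by
    simp only [sandwichJWB, JWB, map_one, one_mul, mul_one]
  rw [h, EB_mul_self_of_eq_zero _ rfl]

theorem sandwichJWB_succ_sq {n : ℕ} (hn : IsIdempotentElem (JWB n))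
    (hn_succ : IsIdempotentElem (JWB (n + 1))) :
    sandwichJWB (n + 1) * sandwichJWB (n + 1) =
      (-(bqInt (n + 1 + 1) / bqInt (n + 1))) • sandwichJWB (n + 1) := by
  have hp := (hn.map (TLBincl n)).map (TLBincl (n + 1))
  have hx := hn_succ.map (TLBincl (n + 1))
  rw [TLBincl_JWB_succ] at hx
  rw [sandwichJWB, TLBincl_JWB_succ, ← neg_add_bqInt_div_mul_braidCoeff]
  exact wenzlStep_mul_mul_wenzlStep_sq hp (EB_last_commute_TLBincl_TLBincl (JWB n))
    (EB_mul_self _ (by simp)) (EB_mul_EB_mul_EB _ _ (by simp)) hx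

theorem isIdempotentElem_JWB_succ {n : ℕ} (hn : IsIdempotentElem (JWB n))
    (hsq : sandwichJWB n * sandwichJWB n =
      (-(bqInt (n + 1) / bqInt n)) • sandwichJWB n) :
    IsIdempotentElem (JWB (n + 1)) := by
  have h_coeff : bqInt n / bqInt (n + 1) * -(bqInt (n + 1) / bqInt n) = -1 := by
    have h := bqInt_natCast_ne_zero n
    have h_succ := bqInt_natCast_ne_zero (n + 1)
    rw [Nat.cast_succ] at h_succ
    field_simp
  exact isIdempotentElem_wenzlStep (hn.map (TLBincl n)) hsq h_coeff

theorem isIdempotentElem_JWB (n : ℕ) : IsIdempotentElem (JWB n) := by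
  induction n using Nat.twoStepInduction with
  | zero => exact .one
  | one =>
    exact isIdempotentElem_JWB_succ .one (by simpa [bqInt_zero] using sandwichJWB_zero_sq)
  | more n hn hn_succ =>
    exact isIdempotentElem_JWB_succ hn_succ (sandwichJWB_succ_sq hn hn_succ)

end JonesWenzl

/-- For `n ≥ 1`,
`(Q^{(n)} e_n Q^{(n)})² = -([n+1]_s/[n]_s) Q^{(n)} e_n Q^{(n)}` in `TL^B_{n+1}`. -/
theorem JWB_e_JWB_sq (n : ℕ) (hn : 1 ≤ n) :
    (TLBincl n (JWB n) * EB (Fin.last n) * TLBincl n (JWB n)) *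
        (TLBincl n (JWB n) * EB (Fin.last n) * TLBincl n (JWB n)) =
      (-(bqInt (n + 1) / bqInt n)) •
        (TLBincl n (JWB n) * EB (Fin.last n) * TLBincl n (JWB n)) := by
  obtain ⟨m, rfl⟩ := Nat.exists_eq_add_of_le' hn
  exact sandwichJWB_succ_sq (isIdempotentElem_JWB m) (isIdempotentElem_JWB (m + 1))
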